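/- arXiv:2107.07819 — 3 statements merged into one kernel-verified Lean document; each statement's English description precedes it below -/
import Mathlib

section
/- Let A be a complex *-algebra that is algebraic and admits a pre-C*-norm. Then A satisfies the (UPSR)-axiom: for every positive element x ∈ A₊ there exists a unique y ∈ A₊ with y² = x, and moreover this y lies in the bicommutant {x}''. -/
/-- A (possibly non-unital) complex algebra is *algebraic* if every element generates a
finite-dimensional subalgebra (equivalently, every element is a root of a nonzero
polynomial with complex coefficients). -/
def IsAlgebraicAlgebra (A : Type*) [NonUnitalRing A] [Module ℂ A] : Prop :=
  ∀ a : A, ∃ S : NonUnitalSubalgebra ℂ A, a ∈ S ∧ FiniteDimensional ℂ S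

/-- A pre-C*-norm on a complex `*`-algebra: a submultiplicative norm `σ` with
`σ (x* x) = σ x ^ 2`. -/
def HasPreCstarNorm (A : Type*) [NonUnitalRing A] [Module ℂ A] [Star A] : Prop :=
  ∃ σ : A → ℝ,
    (∀ a : A, σ a = 0 ↔ a = 0) ∧
    (∀ (c : ℂ) (a : A), σ (c • a) = ‖c‖ * σ a) ∧
    (∀ a b : A, σ (a + b) ≤ σ a + σ b) ∧
    (∀ a b : A, σ (a * b) ≤ σ a * σ b) ∧
    (∀ a : A, σ (star a * a) = σ a ^ 2)

/-- The involution is proper if `a* a = 0` implies `a = 0`. -/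
def HasProperInvolution (A : Type*) [NonUnitalRing A] [Star A] : Prop :=
  ∀ a : A, star a * a = 0 → a = 0

/-- Hermitian: every selfadjoint element has real spectrum (computed in the
unitization `ℂ ⊕ A`). -/
def IsHermitianStarAlgebra (A : Type*) [NonUnitalRing A] [Module ℂ A]
    [SMulCommClass ℂ A A] [IsScalarTower ℂ A A] [Star A] : Prop :=
  ∀ a : A, star a = a → ∀ z ∈ spectrum ℂ (a : Unitization ℂ A), z.im = 0

/-- Semisimple: the Jacobson radical is `{0}` (expressed via the unitization, whose
Jacobson radical meets `A` exactly in the Jacobson radical of `A`). -/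
def IsSemisimpleAlgebra (A : Type*) [NonUnitalRing A] [Module ℂ A]
    [SMulCommClass ℂ A A] [IsScalarTower ℂ A A] : Prop :=
  ∀ a : A, (a : Unitization ℂ A) ∈ (⊥ : Ideal (Unitization ℂ A)).jacobson → a = 0

/-- The commutant of a subset of a multiplicative structure. -/
def commutant {A : Type*} [Mul A] (S : Set A) : Set A :=
  {a : A | ∀ s ∈ S, a * s = s * a}

/-- A positive element: a finite sum of elements of the form `a* a`. -/
def IsPositiveElem {A : Type*} [NonUnitalRing A] [Star A] (x : A) : Prop :=
  ∃ (n : ℕ) (f : Fin n → A), x = ∑ i, star (f i) * f i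

/-!
The pre-C*-norm embeds `A` into a C*-algebra `B`: pass to the unitization, where the C*-norm
extends, and then to the completion. In `B` a positive `x` has a unique positive square root,
given by the continuous functional calculus. This root lies in every closed *-subalgebra
containing `x`, and the subalgebra generated by `x` is closed in `B` because it is
finite-dimensional. Hence the root of `x` comes from `A`, and so does the fourth root of `x`,
which witnesses that the root is positive in `A` itself. Being in the subalgebra generated by `x`,
the root lies in the bicommutant of `x`.
-/

section Completion

open UniformSpace

/-- The involution of the completion, extended by continuity. `Completion.map` is a junk value
unless the involution of `E` is uniformly continuous, as it is in a `NormedStarGroup`. -/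
noncomputable instance instStarCompletion {E : Type*} [UniformSpace E] [Star E] :
    Star (Completion E) :=
  ⟨Completion.map star⟩

instance instContinuousStarCompletion {E : Type*} [UniformSpace E] [Star E] :
    ContinuousStar (Completion E) :=
  ⟨Completion.continuous_map⟩

section NormedStarGroup

variable {E : Type*} [SeminormedAddCommGroup E] [StarAddMonoid E] [NormedStarGroup E]

theorem completion_coe_star (a : E) : ((star a : E) : Completion E) = star (a : Completion E) :=
  (Completion.map_coe star_isometry.uniformContinuous a).symm

noncomputable instance instStarAddMonoidCompletion : StarAddMonoid (Completion E) where
  star_involutive a :=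
    Completion.induction_on a (isClosed_eq (by fun_prop) (by fun_prop)) fun a => by
      simp only [← completion_coe_star, star_star]
  star_add a b :=
    Completion.induction_on₂ a b (isClosed_eq (by fun_prop) (by fun_prop)) fun a b => by
      simp only [← completion_coe_star, ← Completion.coe_add, star_add]

instance instStarModuleCompletion {𝕜 : Type*} [NormedField 𝕜] [Star 𝕜] [NormedSpace 𝕜 E]
    [StarModule 𝕜 E] : StarModule 𝕜 (Completion E) where
  star_smul c a :=
    Completion.induction_on a
      (isClosed_eq (continuous_const_smul c).star (continuous_star.const_smul (star c))) fun a => by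
        simp only [← Completion.coe_smul, ← completion_coe_star, star_smul]

end NormedStarGroup

noncomputable instance instStarRingCompletion {A : Type*} [SeminormedRing A] [StarRing A]
    [NormedStarGroup A] : StarRing (Completion A) where
  star_add := star_add
  star_mul a b :=
    Completion.induction_on₂ a b (isClosed_eq (by fun_prop) (by fun_prop)) fun a b => by
      simp only [← completion_coe_star, ← Completion.coe_mul, star_mul]

instance instCStarRingCompletion {A : Type*} [NormedRing A] [StarRing A] [CStarRing A] :
    CStarRing (Completion A) where
  norm_mul_self_le a :=
    Completion.induction_on a (isClosed_le (by fun_prop) (by fun_prop)) fun a => by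
      simpa only [← completion_coe_star, ← Completion.coe_mul, Completion.norm_coe] using
        CStarRing.norm_mul_self_le a

noncomputable instance instCStarAlgebraCompletion {A : Type*} [NormedRing A] [StarRing A]
    [CStarRing A] [NormedAlgebra ℂ A] [StarModule ℂ A] : CStarAlgebra (Completion A) where
  norm_smul_le := norm_smul_le

/-- The canonical embedding of a normed *-algebra into its completion, as a *-homomorphism. -/
noncomputable def completionCoeStarAlgHom (𝕜 A : Type*) [NormedField 𝕜] [SeminormedRing A]
    [StarRing A] [NormedStarGroup A] [NormedAlgebra 𝕜 A] : A →⋆ₐ[𝕜] Completion A where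
  __ := Completion.coeRingHom
  commutes' _ := rfl
  map_star' := completion_coe_star

end Completion

section Embedding

universe u

theorem exists_injective_starHom_of_cstarRing (A : Type u) [NonUnitalNormedRing A] [StarRing A]
    [CStarRing A] [NormedSpace ℂ A] [SMulCommClass ℂ A A] [IsScalarTower ℂ A A] [StarModule ℂ A] :
    ∃ (B : Type u) (_ : CStarAlgebra B) (φ : A →⋆ₙₐ[ℂ] B), Function.Injective φ :=
  ⟨UniformSpace.Completion (Unitization ℂ A), inferInstance,
    (completionCoeStarAlgHom ℂ (Unitization ℂ A)).toNonUnitalStarAlgHom.comp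
      (Unitization.inrNonUnitalStarAlgHom ℂ A),
    (UniformSpace.Completion.coe_injective _).comp Unitization.inr_injective⟩

theorem HasPreCstarNorm.exists_injective_starHom {A : Type u} [NonUnitalRing A]
    [Module ℂ A] [SMulCommClass ℂ A A] [IsScalarTower ℂ A A] [StarRing A] [StarModule ℂ A]
    (hnorm : HasPreCstarNorm A) :
    ∃ (B : Type u) (_ : CStarAlgebra B) (φ : A →⋆ₙₐ[ℂ] B), Function.Injective φ := by
  obtain ⟨σ, σ_eq_zero, σ_smul, σ_add_le, σ_mul_le, σ_star_mul_self⟩ := hnorm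
  let σ_norm : AddGroupNorm A :=
    { toFun := σ
      map_zero' := (σ_eq_zero 0).2 rfl
      add_le' := σ_add_le
      neg' a := by simpa using σ_smul (-1) a
      eq_zero_of_map_eq_zero' a := (σ_eq_zero a).1 }
  let : NonUnitalNormedRing A :=
    { ‹NonUnitalRing A›, σ_norm.toNormedAddCommGroup with norm_mul_le := σ_mul_le }
  let : NormedSpace ℂ A := { norm_smul_le c a := (σ_smul c a).le }
  have : CStarRing A := ⟨fun {a} => ((σ_star_mul_self a).trans (sq (σ a))).ge⟩
  exact exists_injective_starHom_of_cstarRing A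

end Embedding

section Positive

theorem IsPositiveElem.isSelfAdjoint {A : Type*} [NonUnitalRing A] [StarRing A] {x : A}
    (hx : IsPositiveElem x) : IsSelfAdjoint x := by
  obtain ⟨n, f, rfl⟩ := hx
  exact isSelfAdjoint_sum _ fun i _ => .star_mul_self (f i)

theorem IsPositiveElem.star_mul_self {A : Type*} [NonUnitalRing A] [Star A] (a : A) :
    IsPositiveElem (star a * a) :=
  ⟨1, fun _ => a, by simp⟩

theorem IsPositiveElem.map_nonneg {F A B : Type*} [NonUnitalRing A] [Star A] [NonUnitalRing B]
    [PartialOrder B] [StarRing B] [StarOrderedRing B] [FunLike F A B] [NonUnitalRingHomClass F A B]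
    [StarHomClass F A B] (φ : F) {x : A} (hx : IsPositiveElem x) : 0 ≤ φ x := by
  obtain ⟨n, f, rfl⟩ := hx
  simp only [map_sum, map_mul, map_star]
  exact Finset.sum_nonneg fun i _ => star_mul_self_nonneg (φ (f i))

theorem IsPositiveElem.eq_of_mul_self_eq_mul_self {F A B : Type*} [NonUnitalRing A] [Star A]
    [NonUnitalCStarAlgebra B] [PartialOrder B] [StarOrderedRing B] [FunLike F A B]
    [NonUnitalRingHomClass F A B] [StarHomClass F A B] {φ : F} (hφ : Function.Injective φ) {y z : A}
    (hy : IsPositiveElem y) (hz : IsPositiveElem z) (h : y * y = z * z) : y = z :=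
  hφ <| (CFC.mul_self_eq_mul_self_iff _ _ (hy.map_nonneg φ) (hz.map_nonneg φ)).1 <| by
    rw [← map_mul, ← map_mul, h]

variable {A B : Type*} [NonUnitalRing A] [StarRing A] [Module ℂ A]
  [NonUnitalCStarAlgebra B] [PartialOrder B] [StarOrderedRing B]
variable (φ : A →⋆ₙₐ[ℂ] B) (T : NonUnitalStarSubalgebra ℂ A) [FiniteDimensional ℂ T]

theorem exists_mem_map_eq_sqrt {a : A} (haT : a ∈ T) (ha : 0 ≤ φ a) :
    ∃ b ∈ T, φ b = CFC.sqrt (φ a) := by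
  have hclosed : IsClosed (T.map φ : Set B) :=
    (T.toSubmodule.map (φ : A →ₗ[ℂ] B)).closed_of_finiteDimensional
  have hmem : cfcₙ Real.sqrt (φ a) ∈ T.map φ :=
    cfcₙ_mem (𝕜' := ℂ) (hs := hclosed) Real.sqrt ⟨a, haT, rfl⟩
  rwa [← CFC.sqrt_eq_real_sqrt _ ha] at hmem

variable {φ T}

theorem exists_mem_map_nonneg_and_mul_self_eq (hφ : Function.Injective φ) {a : A} (haT : a ∈ T)
    (ha : 0 ≤ φ a) : ∃ b ∈ T, 0 ≤ φ b ∧ b * b = a := by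
  obtain ⟨b, hbT, hb⟩ := exists_mem_map_eq_sqrt φ T haT ha
  exact ⟨b, hbT, hb ▸ CFC.sqrt_nonneg _,
    hφ <| by rw [map_mul, hb, CFC.sqrt_mul_sqrt_self _ ha]⟩

theorem isPositiveElem_of_map_nonneg (hφ : Function.Injective φ) {a : A} (haT : a ∈ T)
    (ha : 0 ≤ φ a) : IsPositiveElem a := by
  obtain ⟨b, -, hb, rfl⟩ := exists_mem_map_nonneg_and_mul_self_eq hφ haT ha
  have hb_star : star b = b := hφ <| by rw [map_star, hb.isSelfAdjoint.star_eq]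
  simpa only [hb_star] using IsPositiveElem.star_mul_self b

theorem IsPositiveElem.exists_mem_mul_self_eq (hφ : Function.Injective φ) {x : A} (hxT : x ∈ T)
    (hx : IsPositiveElem x) : ∃ y ∈ T, IsPositiveElem y ∧ y * y = x := by
  obtain ⟨y, hyT, hy, hyx⟩ := exists_mem_map_nonneg_and_mul_self_eq hφ hxT (hx.map_nonneg φ)
  exact ⟨y, hyT, isPositiveElem_of_map_nonneg hφ hyT hy, hyx⟩

end Positive

section Adjoin

theorem adjoin_singleton_toNonUnitalSubalgebra {R A : Type*} [CommSemiring R] [StarRing R]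
    [NonUnitalSemiring A] [StarRing A] [Module R A] [IsScalarTower R A A] [SMulCommClass R A A]
    [StarModule R A] {x : A} (hx : IsSelfAdjoint x) :
    (NonUnitalStarAlgebra.adjoin R {x}).toNonUnitalSubalgebra = NonUnitalAlgebra.adjoin R {x} := by
  rw [NonUnitalStarAlgebra.adjoin_toNonUnitalSubalgebra, Set.star_singleton, hx.star_eq,
    Set.union_self]

theorem commutant_eq_centralizer {A : Type*} [Mul A] (S : Set A) : commutant S = S.centralizer :=
  Set.ext fun _ => forall₂_congr fun _ _ => eq_comm

theorem mem_bicommutant_of_mem_adjoin {R A : Type*} [CommSemiring R] [NonUnitalSemiring A]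
    [Module R A] [IsScalarTower R A A] [SMulCommClass R A A] {S : Set A} {y : A}
    (hy : y ∈ NonUnitalAlgebra.adjoin R S) : y ∈ commutant (commutant S) := by
  simp only [commutant_eq_centralizer]
  exact NonUnitalAlgebra.adjoin_le_centralizer_centralizer R S hy

theorem IsAlgebraicAlgebra.finiteDimensional_adjoin_singleton {A : Type*} [NonUnitalRing A]
    [Module ℂ A] [SMulCommClass ℂ A A] [IsScalarTower ℂ A A] (halg : IsAlgebraicAlgebra A) (a : A) :
    FiniteDimensional ℂ (NonUnitalAlgebra.adjoin ℂ {a}) := by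
  obtain ⟨S, haS, hS⟩ := halg a
  have : FiniteDimensional ℂ S.toSubmodule := hS
  have hle : NonUnitalAlgebra.adjoin ℂ {a} ≤ S :=
    NonUnitalAlgebra.adjoin_le (Set.singleton_subset_iff.2 haS)
  exact Submodule.finiteDimensional_of_le (S₂ := S.toSubmodule) hle

end Adjoin

theorem upsr_axiom_of_algebraic_preCstarNorm_general {A : Type*} [NonUnitalRing A] [Module ℂ A]
    [SMulCommClass ℂ A A] [IsScalarTower ℂ A A] [StarRing A] [StarModule ℂ A]
    (hnorm : HasPreCstarNorm A) {x : A} (hx : IsPositiveElem x)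
    (hfin : FiniteDimensional ℂ (NonUnitalAlgebra.adjoin ℂ {x})) :
    ∃ y : A, (IsPositiveElem y ∧ y * y = x) ∧
      (∀ z : A, IsPositiveElem z → z * z = x → z = y) ∧
      y ∈ commutant (commutant {x}) := by
  obtain ⟨B, _, φ, hφ⟩ := hnorm.exists_injective_starHom
  let := CStarAlgebra.spectralOrder B
  have := CStarAlgebra.spectralOrderedRing B
  have hadjoin : (NonUnitalStarAlgebra.adjoin ℂ {x}).toNonUnitalSubalgebra =
      NonUnitalAlgebra.adjoin ℂ {x} := adjoin_singleton_toNonUnitalSubalgebra hx.isSelfAdjoint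
  have : FiniteDimensional ℂ (NonUnitalStarAlgebra.adjoin ℂ {x}) := by
    rw [← hadjoin] at hfin
    exact hfin
  obtain ⟨y, hy_mem, hy, hyx⟩ :=
    hx.exists_mem_mul_self_eq hφ (NonUnitalStarAlgebra.self_mem_adjoin_singleton ℂ x)
  exact ⟨y, ⟨hy, hyx⟩, fun z hz hzx => hz.eq_of_mul_self_eq_mul_self hφ hy (hzx.trans hyx.symm),
    mem_bicommutant_of_mem_adjoin (hadjoin.le hy_mem)⟩

/-- An algebraic complex `*`-algebra with a pre-C*-norm satisfies the
(UPSR)-axiom: every positive element has a unique positive square root, which moreover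
lies in the bicommutant of `{x}`. -/
theorem upsr_axiom_of_algebraic_preCstarNorm (A : Type*) [NonUnitalRing A] [Module ℂ A]
    [SMulCommClass ℂ A A] [IsScalarTower ℂ A A] [StarRing A] [StarModule ℂ A]
    (halg : IsAlgebraicAlgebra A) (hnorm : HasPreCstarNorm A) :
    ∀ x : A, IsPositiveElem x →
      ∃ y : A, (IsPositiveElem y ∧ y * y = x) ∧
        (∀ z : A, IsPositiveElem z → z * z = x → z = y) ∧
        y ∈ commutant (commutant {x}) :=
  fun _ hx => upsr_axiom_of_algebraic_preCstarNorm_general hnorm hx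
    (halg.finiteDimensional_adjoin_singleton _)
end

section
/- Let A be a complex *-algebra that is algebraic and admits a pre-C*-norm. Then A is finite dimensional if and only if every family of pairwise orthogonal nonzero projections in A is finite. -/
/-!
A pre-C*-norm makes the involution proper, so normal nilpotent elements vanish and a normal element
of an algebraic algebra is a linear combination of spectral projections, each of them a multiple of
the element itself. If orthogonal families of projections are finite, then the ordered set of
projections satisfies both chain conditions: every nonzero projection dominates a minimal one, and a
projection that is maximal among the finite sums of minimal projections is a unit of `A`. For a
minimal projection `e` the corner `eAe` is `ℂe`, hence `eAf` is at most one-dimensional for minimal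
`e` and `f`, and `A = uAu` is a finite sum of such components. Conversely, pairwise orthogonal
nonzero projections are linearly independent.
-/

open Polynomial

theorem HasPreCstarNorm.hasProperInvolution {A : Type*} [NonUnitalRing A] [Module ℂ A] [Star A]
    (h : HasPreCstarNorm A) : HasProperInvolution A := by
  obtain ⟨σ, hσ, -, -, -, hstar⟩ := h
  intro a ha
  rw [← hσ, ← sq_eq_zero_iff, ← hstar, ha, (hσ 0).2 rfl]

section Polynomial

variable {K : Type*} [Field K]

theorem dvd_pow_card_roots_of_forall_mem_roots {m p : K[X]} (hm : m.Monic) (hsplit : m.Splits)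
    (h : ∀ z ∈ m.roots, p.IsRoot z) : m ∣ p ^ m.roots.card := by
  conv_lhs => rw [hsplit.eq_prod_roots_of_monic hm]
  simpa using Multiset.prod_dvd_prod_of_dvd (X - C ·) (fun _ : K ↦ p)
    fun z hz ↦ dvd_iff_isRoot.2 (h z hz)

theorem eval_lagrangeBasis_id [DecidableEq K] {s : Finset K} {w : K} (hw : w ∈ s) (z : K) :
    (Lagrange.basis s id z).eval w = if z = w then 1 else 0 := by
  split_ifs with h
  · subst h
    exact Lagrange.eval_basis_self Function.injective_id.injOn hw
  · exact Lagrange.eval_basis_of_ne (v := id) h hw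

end Polynomial

instance isStarNormal_aeval {K R : Type*} [CommSemiring K] [Semiring R] [Algebra K R] [StarRing R]
    {u : R} [IsStarNormal u] (p : K[X]) : IsStarNormal (aeval u p) := by
  have commute_aeval {x : R} (hx : Commute x u) : Commute x (aeval u p) :=
    Algebra.commute_of_mem_adjoin_singleton_of_commute (aeval_mem_adjoin_singleton K u) hx
  have star_commute : Commute (star u) (aeval u p) := commute_aeval (star_comm_self' u)
  exact ⟨commute_aeval (commute_star_comm.1 star_commute).symm⟩

namespace HasProperInvolution

theorem isStarProjection {A : Type*} [NonUnitalRing A] [StarRing A] (hA : HasProperInvolution A)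
    {q : A} [IsStarNormal q] (hq : IsIdempotentElem q) : IsStarProjection q := by
  have hcomm : Commute (star q) q := star_comm_self' q
  have hstar : IsStarProjection (star q * q) :=
    ⟨hq.star.mul_of_commute hcomm hq, .star_mul_self q⟩
  have hsub : q - star q * q = 0 := by
    apply hA
    have h₁ : star q * (star q * q) = star q * q := by rw [← mul_assoc, hq.star.eq]
    have h₂ : star q * q * q = star q * q := by rw [mul_assoc, hq.eq]
    rw [star_sub, hstar.isSelfAdjoint.star_eq, sub_mul, mul_sub, mul_sub, h₁, h₂,
      hstar.isIdempotentElem.eq, sub_self]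
  rwa [sub_eq_zero.1 hsub]

section Unital

variable {R : Type*} [Ring R] [StarRing R]

theorem eq_zero_of_isSelfAdjoint_of_isNilpotent (hR : HasProperInvolution R) {a : R}
    (ha : IsSelfAdjoint a) (hnil : IsNilpotent a) : a = 0 := by
  obtain ⟨n, hn⟩ := hnil
  have hpow : a ^ 2 ^ n = 0 := pow_eq_zero_of_le Nat.lt_two_pow_self.le hn
  clear hn
  induction n with
  | zero => simpa using hpow
  | succ k ih =>
    exact ih <| hR _ <| by rw [(ha.pow _).star_eq, ← pow_two, ← pow_mul, ← pow_succ, hpow]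

theorem eq_zero_of_isNilpotent (hR : HasProperInvolution R) {a : R} [IsStarNormal a]
    (hnil : IsNilpotent a) : a = 0 :=
  have hcomm : Commute (star a) a := star_comm_self' a
  hR a <| hR.eq_zero_of_isSelfAdjoint_of_isNilpotent (.star_mul_self a)
    (hcomm.isNilpotent_mul_left hnil)

theorem aeval_eq_aeval {K : Type*} [Field K] [IsAlgClosed K] [Algebra K R]
    (hR : HasProperInvolution R) {u : R} [IsStarNormal u] (hu : IsIntegral K u) {p q : K[X]}
    (h : ∀ z ∈ (minpoly K u).roots, p.eval z = q.eval z) : aeval u p = aeval u q := by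
  obtain ⟨r, hr⟩ := dvd_pow_card_roots_of_forall_mem_roots (p := p - q) (minpoly.monic hu)
    (IsAlgClosed.splits _) fun z hz ↦ by simp [h z hz]
  rw [← sub_eq_zero, ← map_sub]
  refine hR.eq_zero_of_isNilpotent ⟨(minpoly K u).roots.card, ?_⟩
  rw [← map_pow, hr, map_mul, minpoly.aeval, zero_mul]

end Unital

end HasProperInvolution

section SpectralIdempotent

variable {K R : Type*} [Field K] [DecidableEq K] [Ring R] [Algebra K R]

/-- The value at `u` of the polynomial that is `1` at `z` and `0` at the other roots of the minimal
polynomial of `u`; for `u` normal in an algebra with proper involution this is the projection onto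
the `z`-eigenspace of `u`. If `z` is not a root, then this projection is `0`. -/
noncomputable def spectralIdempotent (u : R) (z : K) : R :=
  aeval u (Lagrange.basis (minpoly K u).roots.toFinset id z)

variable [IsAlgClosed K] [StarRing R] {u : R} [IsStarNormal u]

theorem isStarProjection_spectralIdempotent (hR : HasProperInvolution R) (hu : IsIntegral K u)
    (z : K) : IsStarProjection (spectralIdempotent u z) := by
  have : IsStarNormal (spectralIdempotent u z) := isStarNormal_aeval _
  refine hR.isStarProjection ?_
  rw [IsIdempotentElem, spectralIdempotent, ← map_mul]
  exact hR.aeval_eq_aeval hu fun w hw ↦ by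
    simp [eval_lagrangeBasis_id (Multiset.mem_toFinset.2 hw)]

theorem mul_spectralIdempotent (hR : HasProperInvolution R) (hu : IsIntegral K u) (z : K) :
    u * spectralIdempotent u z = z • spectralIdempotent u z := by
  set b := Lagrange.basis (minpoly K u).roots.toFinset id z
  calc u * aeval u b = aeval u (X * b) := by simp
    _ = aeval u (z • b) := hR.aeval_eq_aeval hu fun w hw ↦ by
      simp +contextual [b, eval_lagrangeBasis_id (Multiset.mem_toFinset.2 hw)]
    _ = z • aeval u b := map_smul _ _ _

theorem sum_smul_spectralIdempotent (hR : HasProperInvolution R) (hu : IsIntegral K u) :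
    ∑ z ∈ (minpoly K u).roots.toFinset, z • spectralIdempotent u z = u := by
  set s := (minpoly K u).roots.toFinset
  calc ∑ z ∈ s, z • aeval u (Lagrange.basis s id z)
      = aeval u (∑ z ∈ s, z • Lagrange.basis s id z) := by simp only [map_sum, map_smul]
    _ = aeval u X := hR.aeval_eq_aeval hu fun w hw ↦ by
      have hws : w ∈ s := Multiset.mem_toFinset.2 hw
      simp [eval_finsetSum, eval_lagrangeBasis_id hws, hws]
    _ = u := aeval_X u

end SpectralIdempotent

section Unitization

theorem HasProperInvolution.unitization {K A : Type*} [CommRing K] [StarRing K] [NonUnitalRing A]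
    [StarRing A] [Module K A] [IsScalarTower K A A] [SMulCommClass K A A] [StarModule K A]
    (hK : HasProperInvolution K) (hA : HasProperInvolution A) :
    HasProperInvolution (Unitization K A) := by
  intro x hx
  have hfst : x.fst = 0 := hK _ (by simpa using congrArg (Unitization.fstHom K A) hx)
  obtain ⟨a, rfl⟩ : ∃ a : A, x = a := ⟨x.snd, by ext <;> simp [hfst]⟩
  rw [← Unitization.inr_star, ← Unitization.inr_mul] at hx
  rw [hA a (Unitization.inr_injective (hx.trans (Unitization.inr_zero K).symm)),
    Unitization.inr_zero]

theorem IsAlgebraicAlgebra.isIntegral_inr {A : Type*} [NonUnitalRing A] [Module ℂ A]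
    [IsScalarTower ℂ A A] [SMulCommClass ℂ A A] (hA : IsAlgebraicAlgebra A) (a : A) :
    IsIntegral ℂ (a : Unitization ℂ A) := by
  obtain ⟨S, ha, hfin⟩ := hA a
  have : FiniteDimensional ℂ (Unitization ℂ S) := .equiv (Unitization.linearEquiv ℂ ℂ S).symm
  simpa using (IsIntegral.of_finite ℂ ((⟨a, ha⟩ : S) : Unitization ℂ S)).map
    (Unitization.lift ((Unitization.inrNonUnitalAlgHom ℂ A).comp
      (NonUnitalSubalgebraClass.subtype S)))

theorem IsAlgebraicAlgebra.mem_span_isStarProjection {A : Type*} [NonUnitalRing A] [Module ℂ A]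
    [IsScalarTower ℂ A A] [SMulCommClass ℂ A A] [StarRing A] [StarModule ℂ A]
    (halg : IsAlgebraicAlgebra A) (hA : HasProperInvolution A) (a : A) [IsStarNormal a] :
    a ∈ Submodule.span ℂ {p : A | IsStarProjection p ∧ ∃ y, a * y = p} := by
  have hU : HasProperInvolution (Unitization ℂ A) :=
    .unitization (fun _ ↦ CStarRing.star_mul_self_eq_zero_iff _ |>.1) hA
  have ha : IsIntegral ℂ (a : Unitization ℂ A) := halg.isIntegral_inr a
  have hsum := congrArg (Unitization.sndHom ℂ ℂ A) (sum_smul_spectralIdempotent hU ha)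
  simp only [map_sum, map_smul, Unitization.sndHom_apply, Unitization.snd_inr] at hsum
  suffices ∀ z : ℂ, z • (spectralIdempotent (a : Unitization ℂ A) z).snd ∈
      Submodule.span ℂ {p : A | IsStarProjection p ∧ ∃ y, a * y = p} by
    have hmem := Submodule.sum_mem _ fun z
      (_ : z ∈ (minpoly ℂ (a : Unitization ℂ A)).roots.toFinset) ↦ this z
    rwa [hsum] at hmem
  intro z
  rcases eq_or_ne z 0 with rfl | hz
  · simp
  have heig := mul_spectralIdempotent hU ha z
  have hproj := isStarProjection_spectralIdempotent hU ha z
  obtain ⟨p, hp⟩ : ∃ p : A, spectralIdempotent (a : Unitization ℂ A) z = p := by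
    have hfst := congrArg (Unitization.fstHom ℂ A) heig
    exact ⟨_, Unitization.ext (by simpa [hz] using hfst) rfl⟩
  rw [hp] at heig hproj
  rw [hp, Unitization.snd_inr]
  rw [← Unitization.inr_mul, ← Unitization.inr_smul, Unitization.inr_injective.eq_iff] at heig
  rw [Unitization.isStarProjection_inr_iff] at hproj
  refine Submodule.smul_mem _ _ (Submodule.subset_span ⟨hproj, z⁻¹ • p, ?_⟩)
  rw [mul_smul_comm, heig, inv_smul_smul₀ hz]

end Unitization

/-- The projections of a `*`-ring, ordered by `p ≤ q ↔ q * p = p`; the minimal projections are the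
atoms of this order. -/
@[ext]
structure StarProjection (A : Type*) [Mul A] [Star A] where
  val : A
  isStarProjection : IsStarProjection val

namespace StarProjection

instance {A : Type*} [Mul A] [Star A] : CoeOut (StarProjection A) A := ⟨StarProjection.val⟩

section NonUnitalSemiring

variable {A : Type*} [NonUnitalSemiring A] [StarRing A]

theorem isSelfAdjoint (p : StarProjection A) : IsSelfAdjoint (p : A) :=
  p.isStarProjection.isSelfAdjoint

theorem star_coe (p : StarProjection A) : star (p : A) = p := p.isSelfAdjoint.star_eq

theorem mul_self (p : StarProjection A) : (p * p : A) = p := p.isStarProjection.isIdempotentElem.eq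

theorem mul_eq_right_iff_mul_eq_left {p q : StarProjection A} :
    (q * p : A) = p ↔ (p * q : A) = p := by
  rw [← star_inj, star_mul, p.star_coe, q.star_coe]

instance : PartialOrder (StarProjection A) where
  le p q := (q * p : A) = p
  le_refl := mul_self
  le_trans p q r hpq hqr := by rw [← hpq, ← mul_assoc, hqr]
  le_antisymm p q hpq hqp :=
    StarProjection.ext (hpq.symm.trans (mul_eq_right_iff_mul_eq_left.1 hqp))

theorem le_iff_mul_eq_right {p q : StarProjection A} : p ≤ q ↔ (q * p : A) = p := Iff.rfl

theorem le_iff_mul_eq_left {p q : StarProjection A} : p ≤ q ↔ (p * q : A) = p :=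
  mul_eq_right_iff_mul_eq_left

instance : OrderBot (StarProjection A) where
  bot := ⟨0, .zero A⟩
  bot_le p := mul_zero (p : A)

theorem coe_eq_zero {p : StarProjection A} : (p : A) = 0 ↔ p = ⊥ :=
  (StarProjection.ext_iff (x := p) (y := ⊥)).symm

end NonUnitalSemiring

section NonUnitalRing

variable {A : Type*} [NonUnitalRing A] [StarRing A]

theorem isStarProjection_sub {p q : StarProjection A} (h : p ≤ q) : IsStarProjection (q - p : A) :=
  p.isStarProjection.sub_of_mul_eq_right q.isStarProjection h

theorem sub_mul_sub_eq_zero {p q r s : StarProjection A} (hpq : p ≤ q) (hqr : q ≤ r) (hrs : r ≤ s) :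
    (q - p : A) * (s - r) = 0 := by
  have hqs := hqr.trans hrs
  rw [sub_mul, mul_sub, mul_sub, le_iff_mul_eq_left.1 hqr, le_iff_mul_eq_left.1 hqs,
    le_iff_mul_eq_left.1 (hpq.trans hqr), le_iff_mul_eq_left.1 (hpq.trans hqs)]
  simp only [sub_self]

end NonUnitalRing

end StarProjection

theorem mul_eq_zero_symm_of_isSelfAdjoint {A : Type*} [NonUnitalSemiring A] [StarRing A] {a b : A}
    (ha : IsSelfAdjoint a) (hb : IsSelfAdjoint b) (h : a * b = 0) : b * a = 0 :=
  ((ha.commute_iff hb).2 (h ▸ .zero A)).eq.symm.trans h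

/-- Every family of pairwise orthogonal nonzero projections in `A` is finite; this forces both
chain conditions on projections. -/
def HasFiniteOrthogonalProjections (A : Type*) [Mul A] [Zero A] [Star A] : Prop :=
  ∀ S : Set A, (∀ e ∈ S, e ≠ 0 ∧ star e = e ∧ e * e = e) →
    (∀ e ∈ S, ∀ f ∈ S, e ≠ f → e * f = 0) → S.Finite

namespace HasFiniteOrthogonalProjections

variable {A : Type*} [NonUnitalRing A] [StarRing A]

theorem exists_eq_zero (h : HasFiniteOrthogonalProjections A) {d : ℕ → A}
    (hd : ∀ n, IsStarProjection (d n)) (horth : ∀ m n, m < n → d m * d n = 0) : ∃ n, d n = 0 := by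
  by_contra! hne
  have hsymm {m n : ℕ} (hmn : m ≠ n) : d m * d n = 0 :=
    hmn.lt_or_gt.elim (horth m n) fun hlt ↦
      mul_eq_zero_symm_of_isSelfAdjoint (hd n).isSelfAdjoint (hd m).isSelfAdjoint (horth n m hlt)
  have hinj : Function.Injective d := fun m n hmn ↦ by
    by_contra hne'
    exact hne n (by rw [← (hd n).isIdempotentElem.eq, ← hsymm hne', hmn])
  refine Set.infinite_range_of_injective hinj (h _ ?_ ?_)
  · rintro _ ⟨n, rfl⟩
    exact ⟨hne n, (hd n).isSelfAdjoint.star_eq, (hd n).isIdempotentElem.eq⟩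
  · rintro _ ⟨m, rfl⟩ _ ⟨n, rfl⟩ hmn
    exact hsymm (ne_of_apply_ne d hmn)

theorem wellFoundedLT (h : HasFiniteOrthogonalProjections A) :
    WellFoundedLT (StarProjection A) := by
  refine ⟨wellFounded_iff_isEmpty_descending_chain.2 ⟨fun ⟨g, hg⟩ ↦ ?_⟩⟩
  have hanti : StrictAnti g := strictAnti_nat_of_succ_lt hg
  have hproj n : IsStarProjection (g n - g (n + 1) : A) :=
    StarProjection.isStarProjection_sub (hg n).le
  obtain ⟨n, hn⟩ := h.exists_eq_zero hproj fun m n hmn ↦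
    mul_eq_zero_symm_of_isSelfAdjoint (hproj n).isSelfAdjoint (hproj m).isSelfAdjoint <|
      StarProjection.sub_mul_sub_eq_zero (hg n).le (hanti.antitone hmn) (hg m).le
  exact (hg n).ne' (StarProjection.ext (sub_eq_zero.1 hn))

theorem wellFoundedGT (h : HasFiniteOrthogonalProjections A) :
    WellFoundedGT (StarProjection A) := by
  refine ⟨wellFounded_iff_isEmpty_descending_chain.2 ⟨fun ⟨g, hg⟩ ↦ ?_⟩⟩
  have hmono : StrictMono g := strictMono_nat_of_lt_succ hg
  obtain ⟨n, hn⟩ := h.exists_eq_zero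
    (fun n ↦ StarProjection.isStarProjection_sub (hg n).le) fun m n hmn ↦
      StarProjection.sub_mul_sub_eq_zero (hg m).le (hmono.monotone hmn) (hg n).le
  exact (hg n).ne' (StarProjection.ext (sub_eq_zero.1 hn))

end HasFiniteOrthogonalProjections

/-- The minimal nonzero projections, as a set of elements of the ring so that sums of them can be
formed. -/
def minimalProjections (A : Type*) [NonUnitalSemiring A] [StarRing A] : Set A :=
  (↑) '' {e : StarProjection A | IsAtom e}

section Peirce

variable (R : Type*) {A : Type*} [CommSemiring R] [NonUnitalNonAssocSemiring A] [Module R A]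
  [IsScalarTower R A A] [SMulCommClass R A A]

/-- The Peirce component `pAq` of an algebra `A`; here `p` and `q` need not be idempotent. -/
def peirceComponent (p q : A) : Submodule R A :=
  LinearMap.range (LinearMap.mulLeftRight R (p, q))

variable {R}

theorem peirceComponent_eq_bot {p q : A} (h : ∀ x, p * x * q = 0) : peirceComponent R p q = ⊥ :=
  LinearMap.range_eq_bot.2 (LinearMap.ext h)

theorem peirceComponent_add_left_le (p p' q : A) :
    peirceComponent R (p + p') q ≤ peirceComponent R p q ⊔ peirceComponent R p' q := by
  rintro _ ⟨x, rfl⟩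
  simp only [LinearMap.mulLeftRight_apply, add_mul]
  exact Submodule.add_mem_sup ⟨x, rfl⟩ ⟨x, rfl⟩

theorem peirceComponent_add_right_le (p q q' : A) :
    peirceComponent R p (q + q') ≤ peirceComponent R p q ⊔ peirceComponent R p q' := by
  rintro _ ⟨x, rfl⟩
  rw [LinearMap.mulLeftRight_apply, mul_add]
  exact Submodule.add_mem_sup ⟨x, rfl⟩ ⟨x, rfl⟩

end Peirce

section Algebraic

variable {A : Type*} [NonUnitalRing A] [Module ℂ A] [IsScalarTower ℂ A A] [SMulCommClass ℂ A A]
  [StarRing A] [StarModule ℂ A]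

theorem IsAlgebraicAlgebra.exists_mul_eq_starProjection (halg : IsAlgebraicAlgebra A)
    (hA : HasProperInvolution A) {a : A} (ha : a ≠ 0) :
    ∃ p : StarProjection A, p ≠ ⊥ ∧ ∃ y, a * y = p := by
  by_contra! hbot
  have hmul : IsStarNormal (a * star a) := (IsSelfAdjoint.mul_star_self a).isStarNormal
  have hspan : Submodule.span ℂ {p : A | IsStarProjection p ∧ ∃ y, a * star a * y = p} ≤ ⊥ := by
    refine Submodule.span_le.2 fun p ⟨hp, y, hy⟩ ↦ ?_
    by_contra hp0
    exact hbot ⟨p, hp⟩ (mt StarProjection.coe_eq_zero.2 hp0) (star a * y) (by rw [← mul_assoc, hy])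
  have hzero : star (star a) * star a = 0 := by
    rw [star_star]
    exact hspan (halg.mem_span_isStarProjection hA (a * star a))
  exact ha (star_eq_zero.1 (hA _ hzero))

theorem IsAlgebraicAlgebra.exists_unit_mem_closure_minimalProjections
    (halg : IsAlgebraicAlgebra A) (hA : HasProperInvolution A)
    (hfin : HasFiniteOrthogonalProjections A) :
    ∃ u ∈ AddSubmonoid.closure (minimalProjections A), ∀ x, u * x = x ∧ x * u = x := by
  have := hfin.wellFoundedLT
  have := hfin.wellFoundedGT
  obtain ⟨u, hu, humax⟩ := exists_maximal_of_wellFoundedGT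
    (fun p : StarProjection A ↦ (p : A) ∈ AddSubmonoid.closure (minimalProjections A))
    ⟨⊥, zero_mem _⟩
  have hleft (x : A) : u * x = x := by
    by_contra hx
    obtain ⟨p, hp, y, hy⟩ := halg.exists_mul_eq_starProjection hA (sub_ne_zero.2 (Ne.symm hx))
    obtain ⟨e, he, hep⟩ := (IsAtomic.eq_bot_or_exists_atom_le p).resolve_left hp
    have hue : (u * e : A) = 0 := by
      rw [← StarProjection.le_iff_mul_eq_right.1 hep, ← hy, ← mul_assoc, ← mul_assoc, mul_sub,
        ← mul_assoc, u.mul_self, sub_self, zero_mul, zero_mul]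
    have heu : (e * u : A) = 0 :=
      mul_eq_zero_symm_of_isSelfAdjoint u.isSelfAdjoint e.isSelfAdjoint hue
    let v : StarProjection A := ⟨u + e, u.isStarProjection.add e.isStarProjection hue⟩
    have huv : u ≤ v := by
      rw [StarProjection.le_iff_mul_eq_right, add_mul, u.mul_self, heu, add_zero]
    have hvu : v ≤ u := humax (add_mem hu (AddSubmonoid.subset_closure ⟨e, he, rfl⟩)) huv
    refine he.1 (StarProjection.coe_eq_zero.1 ?_)
    have hsum : (u + e : A) = u := congrArg StarProjection.val (hvu.antisymm huv)
    simpa using hsum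
  refine ⟨u, hu, fun x ↦ ⟨hleft x, star_injective ?_⟩⟩
  rw [star_mul, u.star_coe, hleft]

theorem IsAlgebraicAlgebra.corner_mem_span (halg : IsAlgebraicAlgebra A)
    (hA : HasProperInvolution A) {e : StarProjection A} (he : IsAtom e) (a : A) :
    (e * a * e : A) ∈ Submodule.span ℂ {(e : A)} := by
  suffices ⊤ ≤ (Submodule.span ℂ {(e : A)}).comap (LinearMap.mulLeftRight ℂ ((e : A), (e : A))) from
    this (Submodule.mem_top (x := a))
  rw [← span_selfAdjoint, Submodule.span_le]
  intro h hh
  have hnormal : IsStarNormal (e * h * e : A) := by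
    have hconj := IsSelfAdjoint.conjugate (selfAdjoint.mem_iff.1 hh) (e : A)
    rw [e.star_coe] at hconj
    exact hconj.isStarNormal
  refine Submodule.mem_comap.2 <|
    Submodule.span_le.2 ?_ (halg.mem_span_isStarProjection hA (e * h * e : A))
  rintro p ⟨hp, y, hy⟩
  have hep : e * p = p := by
    rw [← hy]
    simp only [← mul_assoc, e.mul_self]
  have hpe : (⟨p, hp⟩ : StarProjection A) ≤ e := StarProjection.le_iff_mul_eq_right.2 hep
  obtain hpbot | hpeq := he.le_iff.1 hpe
  · rw [SetLike.mem_coe, show p = 0 from StarProjection.coe_eq_zero.2 hpbot]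
    exact zero_mem _
  · rw [← hpeq]
    exact Submodule.mem_span_singleton_self p

theorem IsAlgebraicAlgebra.mul_mul_mem_span_of_ne_zero (halg : IsAlgebraicAlgebra A)
    (hA : HasProperInvolution A) {e f : StarProjection A} (he : IsAtom e) (hf : IsAtom f) {y : A}
    (hy : (e * y * f : A) ≠ 0) (x : A) :
    (e * x * f : A) ∈ Submodule.span ℂ {(e * y * f : A)} := by
  set v : A := e * y * f
  have hev : e * v = v := by simp only [v, ← mul_assoc, e.mul_self]
  have hstar : star v = f * star y * e := by
    simp only [v, star_mul, e.star_coe, f.star_coe, mul_assoc]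
  obtain ⟨c, hc⟩ := Submodule.mem_span_singleton.1 (halg.corner_mem_span hA hf (star y * e * y))
  obtain ⟨d, hd⟩ := Submodule.mem_span_singleton.1 (halg.corner_mem_span hA he (x * f * star y))
  have hvv : star v * v = c • (f : A) := by
    rw [hc, hstar]
    simp only [v, ← mul_assoc]
    rw [mul_assoc _ (e : A) (e : A), e.mul_self]
  have hc0 : c ≠ 0 := by
    rintro rfl
    exact hy (hA v (by rw [hvv, zero_smul]))
  have hsmul : c • (e * x * f : A) = d • v := by
    calc c • (e * x * f : A) = e * x * (star v * v) := by rw [hvv, mul_smul_comm]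
      _ = e * (x * f * star y) * e * v := by simp only [hstar, mul_assoc]
      _ = d • v := by rw [← hd, smul_mul_assoc, hev]
  rw [← inv_smul_smul₀ hc0 (e * x * f : A), hsmul]
  exact Submodule.smul_mem _ _ (Submodule.smul_mem _ _ (Submodule.mem_span_singleton_self v))

theorem IsAlgebraicAlgebra.finiteDimensional_peirceComponent (halg : IsAlgebraicAlgebra A)
    (hA : HasProperInvolution A) {p q : A} (hp : p ∈ AddSubmonoid.closure (minimalProjections A))
    (hq : q ∈ AddSubmonoid.closure (minimalProjections A)) :
    FiniteDimensional ℂ (peirceComponent ℂ p q) := by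
  induction hp, hq using AddSubmonoid.closure_induction₂ with
  | mem e f he hf =>
    obtain ⟨e, he, rfl⟩ := he
    obtain ⟨f, hf, rfl⟩ := hf
    by_cases h : ∃ y, (e * y * f : A) ≠ 0
    · obtain ⟨y, hy⟩ := h
      exact Submodule.finiteDimensional_of_le (S₂ := ℂ ∙ (e * y * f : A)) <|
        LinearMap.range_le_iff_comap.2 <| eq_top_iff.2 fun x _ ↦
          halg.mul_mul_mem_span_of_ne_zero hA he hf hy x
    · push Not at h
      rw [peirceComponent_eq_bot h]
      infer_instance
  | zero_left q =>
    rw [peirceComponent_eq_bot fun x ↦ by rw [zero_mul, zero_mul]]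
    infer_instance
  | zero_right p =>
    rw [peirceComponent_eq_bot fun x ↦ mul_zero _]
    infer_instance
  | add_left p p' q _ _ _ hp hp' =>
    exact Submodule.finiteDimensional_of_le (peirceComponent_add_left_le p p' q)
  | add_right p q q' _ _ _ hq hq' =>
    exact Submodule.finiteDimensional_of_le (peirceComponent_add_right_le _ _ _)

theorem HasProperInvolution.finiteDimensional (hA : HasProperInvolution A)
    (halg : IsAlgebraicAlgebra A) (hfin : HasFiniteOrthogonalProjections A) :
    FiniteDimensional ℂ A := by
  obtain ⟨u, hu, hunit⟩ := halg.exists_unit_mem_closure_minimalProjections hA hfin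
  have htop : peirceComponent ℂ u u = ⊤ :=
    eq_top_iff.2 fun x _ ↦ ⟨x, by rw [LinearMap.mulLeftRight_apply, (hunit x).1, (hunit x).2]⟩
  have : FiniteDimensional ℂ (peirceComponent ℂ u u) :=
    halg.finiteDimensional_peirceComponent hA hu hu
  exact .equiv (LinearEquiv.ofTop _ htop)

end Algebraic

theorem linearIndepOn_id_of_orthogonal_isIdempotentElem {K A : Type*} [DivisionRing K]
    [NonUnitalRing A] [Module K A] [SMulCommClass K A A] {S : Set A}
    (hne : ∀ e ∈ S, e ≠ 0) (hidem : ∀ e ∈ S, IsIdempotentElem e)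
    (horth : ∀ e ∈ S, ∀ f ∈ S, e ≠ f → e * f = 0) : LinearIndepOn K id S := by
  rw [linearIndepOn_iff']
  intro t c hts hsum e he
  have hmul : e * ∑ f ∈ t, c f • id f = c e • e := by
    rw [Finset.mul_sum, Finset.sum_eq_single_of_mem e he fun f hf hfe ↦ by
      rw [mul_smul_comm, id, horth e (hts he) f (hts hf) hfe.symm, smul_zero]]
    rw [mul_smul_comm, id, (hidem e (hts he)).eq]
  rw [hsum, mul_zero] at hmul
  exact (smul_eq_zero.1 hmul.symm).resolve_right (hne e (hts he))

theorem finiteDimensional_iff_orthogonal_projections_finite_general (A : Type*) [NonUnitalRing A]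
    [Module ℂ A] [SMulCommClass ℂ A A] [IsScalarTower ℂ A A] [StarRing A] [StarModule ℂ A]
    (halg : IsAlgebraicAlgebra A) (hA : HasProperInvolution A) :
    FiniteDimensional ℂ A ↔
      ∀ S : Set A, (∀ e ∈ S, e ≠ 0 ∧ star e = e ∧ e * e = e) →
        (∀ e ∈ S, ∀ f ∈ S, e ≠ f → e * f = 0) → S.Finite := by
  refine ⟨fun _ S hproj horth ↦ ?_, hA.finiteDimensional halg⟩
  have hindep : LinearIndepOn ℂ id S := linearIndepOn_id_of_orthogonal_isIdempotentElem
    (fun e he ↦ (hproj e he).1) (fun e he ↦ (hproj e he).2.2) horth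
  exact hindep.setFinite

/-- An algebraic complex `*`-algebra with a pre-C*-norm is finite
dimensional iff every family of pairwise orthogonal nonzero projections is finite. -/
theorem finiteDimensional_iff_orthogonal_projections_finite (A : Type*) [NonUnitalRing A]
    [Module ℂ A] [SMulCommClass ℂ A A] [IsScalarTower ℂ A A] [StarRing A] [StarModule ℂ A]
    (halg : IsAlgebraicAlgebra A) (hnorm : HasPreCstarNorm A) :
    FiniteDimensional ℂ A ↔
      ∀ S : Set A, (∀ e ∈ S, e ≠ 0 ∧ star e = e ∧ e * e = e) →
        (∀ e ∈ S, ∀ f ∈ S, e ≠ f → e * f = 0) → S.Finite :=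
  finiteDimensional_iff_orthogonal_projections_finite_general A halg hnorm.hasProperInvolution
end

section
/- Let B be a commutative complex *-algebra. Then B is an algebraic Baer *-algebra if and only if there exists a Stonean topological space T such that B is *-isomorphic to the ℂ-linear span, inside the C*-algebra C(T, ℂ) of continuous complex-valued functions on T, of the characteristic functions of the clopen subsets of T. -/
/-- A Baer `*`-ring: the right annihilator of every nonempty subset is the principal
right ideal generated by a projection. -/
def IsBaerStarRing (A : Type*) [Mul A] [Zero A] [Star A] : Prop :=
  ∀ S : Set A, S.Nonempty → ∃ f : A, star f = f ∧ f * f = f ∧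
    {y : A | ∀ s ∈ S, s * y = 0} = {z : A | ∃ x : A, z = f * x}

/-- The set of characteristic functions of clopen subsets of `T`, inside `C(T, ℂ)`. -/
def clopenCharacteristicFunctions (T : Type*) [TopologicalSpace T] : Set C(T, ℂ) :=
  {f : C(T, ℂ) | ∃ U : Set T, IsClopen U ∧ ∀ t : T, f t = U.indicator 1 t}

/-!
A Baer `*`-ring has a unit and a proper involution, so a commutative one is reduced and its
idempotents are selfadjoint. If `B` is moreover algebraic, i.e. integral over `ℂ`, then all its
residue fields are `ℂ`, and an element satisfying a polynomial equation takes only finitely many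
values on the prime spectrum, each on a closed set. So the Gelfand transform maps `B` into the
locally constant functions on `Spec B`. It is injective because `B` is reduced, and surjective
because clopen subsets of `Spec B` come from idempotents; in particular idempotents span `B`, so
every character commutes with `*`. Finally, the closure of the complement of `V(I)` is `V(Ann I)`,
which is clopen because the Baer condition makes `Ann I` generated by an idempotent.

Conversely, a subset of a `*`-algebra of functions on a Stonean space is annihilated exactly by the
functions vanishing on the closure of the union of its supports, and that closure is clopen.
-/

open PrimeSpectrum Polynomial TopologicalSpace

section Algebraic

theorem IsAlgebraicAlgebra.of_injective {A B : Type*} [NonUnitalRing A] [Module ℂ A]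
    [NonUnitalRing B] [Module ℂ B] (hB : IsAlgebraicAlgebra B) (φ : A →ₙₐ[ℂ] B)
    (hφ : Function.Injective φ) : IsAlgebraicAlgebra A := by
  intro a
  obtain ⟨S, haS, _⟩ := hB (φ a)
  let φS : S.comap φ →ₗ[ℂ] S :=
    (φ : A →ₗ[ℂ] B).restrict (p := (S.comap φ).toSubmodule) (q := S.toSubmodule) fun _ ha => ha
  refine ⟨S.comap φ, haS, Module.Finite.of_injective φS fun x y hxy => ?_⟩
  exact Subtype.ext (hφ (congrArg Subtype.val hxy))

theorem isAlgebraicAlgebra_iff_isIntegral {A : Type*} [Ring A] [Algebra ℂ A] :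
    IsAlgebraicAlgebra A ↔ Algebra.IsIntegral ℂ A := by
  refine ⟨fun h => ⟨fun a => ?_⟩, fun h a => ?_⟩
  · obtain ⟨S, haS, _⟩ := h a
    have : Module.Finite ℂ (Unitization ℂ S) :=
      Module.Finite.equiv (Unitization.linearEquiv ℂ ℂ S).symm
    simpa using
      (IsIntegral.of_finite ℂ ((⟨a, haS⟩ : S) : Unitization ℂ S)).map
        (NonUnitalSubalgebra.unitization S)
  · exact ⟨(Algebra.adjoin ℂ {a}).toNonUnitalSubalgebra, Algebra.self_mem_adjoin_singleton ℂ a,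
      Algebra.finite_adjoin_simple_of_isIntegral (h.isIntegral a)⟩

end Algebraic

section Baer

theorem isBaerStarRing_iff {A : Type*} [Semigroup A] [Zero A] [Star A] :
    IsBaerStarRing A ↔ ∀ S : Set A, S.Nonempty →
      ∃ f : A, IsStarProjection f ∧ ∀ y, (∀ s ∈ S, s * y = 0) ↔ f * y = y := by
  refine forall₂_congr fun S _ => exists_congr fun f => ?_
  rw [isStarProjection_iff', ← and_assoc, and_comm (a := star f = f)]
  refine and_congr_right fun hf => ?_
  have hfix (y : A) : (∃ x, y = f * x) ↔ f * y = y :=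
    ⟨by rintro ⟨x, rfl⟩; rw [← mul_assoc, hf.1], fun h => ⟨y, h.symm⟩⟩
  simp only [Set.ext_iff, Set.mem_ofPred_eq, hfix]

namespace IsBaerStarRing

theorem of_starRingEquiv {A B : Type*} [NonUnitalSemiring A] [Star A] [NonUnitalSemiring B]
    [Star B] (hB : IsBaerStarRing B) (φ : A ≃⋆+* B) : IsBaerStarRing A := by
  refine isBaerStarRing_iff.2 fun S hS => ?_
  obtain ⟨f, hf, hfS⟩ := isBaerStarRing_iff.1 hB (φ '' S) (hS.image φ)
  refine ⟨φ.symm f, hf.map φ.symm, fun y => ?_⟩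
  have hφ := hfS (φ y)
  simp only [Set.forall_mem_image, ← map_mul, map_eq_zero_iff φ φ.injective] at hφ
  rw [hφ, ← (EquivLike.injective φ).eq_iff, map_mul, StarRingEquiv.apply_symm_apply]

theorem exists_left_unit {A : Type*} [SemigroupWithZero A] [Star A] (h : IsBaerStarRing A) :
    ∃ u : A, ∀ a, u * a = a := by
  obtain ⟨u, -, hu⟩ := isBaerStarRing_iff.1 h {0} (Set.singleton_nonempty 0)
  exact ⟨u, fun a => (hu a).1 (by simp)⟩

theorem hasProperInvolution {A : Type*} [NonUnitalRing A] [StarRing A] (h : IsBaerStarRing A) :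
    HasProperInvolution A := by
  intro a ha
  obtain ⟨f, hf, hfa⟩ := isBaerStarRing_iff.1 h {star a} (Set.singleton_nonempty _)
  simp only [Set.mem_singleton_iff, forall_eq] at hfa
  have hstar : star a * f = 0 := (hfa f).2 hf.isIdempotentElem
  calc
    a = f * a := ((hfa a).1 ha).symm
    _ = star (star a * f) := by rw [star_mul, star_star, hf.isSelfAdjoint.star_eq]
    _ = 0 := by rw [hstar, star_zero]

theorem exists_annihilator_eq_span {R : Type*} [CommRing R] [Star R] (h : IsBaerStarRing R)
    (I : Ideal R) : ∃ e, IsIdempotentElem e ∧ I.annihilator = Ideal.span {e} := by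
  obtain ⟨e, he, heI⟩ := isBaerStarRing_iff.1 h I ⟨0, I.zero_mem⟩
  refine ⟨e, he.isIdempotentElem, Ideal.ext fun y => ?_⟩
  have hdvd : e ∣ y ↔ e * y = y :=
    ⟨by rintro ⟨x, rfl⟩; rw [← mul_assoc, he.isIdempotentElem.eq], fun hy => ⟨y, hy.symm⟩⟩
  rw [Ideal.mem_span_singleton, hdvd, ← heI, Submodule.mem_annihilator]
  simp only [smul_eq_mul, mul_comm y, SetLike.mem_coe]

end IsBaerStarRing

namespace HasProperInvolution

theorem isSelfAdjoint_of_isIdempotentElem {A : Type*} [NonUnitalCommRing A] [StarRing A]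
    (h : HasProperInvolution A) {e : A} (he : IsIdempotentElem e) : IsSelfAdjoint e := by
  have hleft : star e * (star e * e) = star e * e := by rw [← mul_assoc, ← star_mul, he.eq]
  have hright : star e * e * e = star e * e := by rw [mul_assoc, he.eq]
  have hsq : star e * e * (star e * e) = star e * e := by
    rw [mul_mul_mul_comm, ← star_mul, he.eq]
  have hzero : star (e - star e * e) * (e - star e * e) = 0 := by
    rw [star_sub, (IsSelfAdjoint.star_mul_self e).star_eq, sub_mul, mul_sub, mul_sub, hleft, hright,
      hsq, sub_self]
  have heq : e = star e * e := sub_eq_zero.1 (h _ hzero)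
  rw [heq]
  exact .star_mul_self e

theorem isReduced {R : Type*} [CommRing R] [StarRing R] (h : HasProperInvolution R) :
    IsReduced R := by
  refine (isReduced_iff_pow_one_lt 2 one_lt_two).2 fun a ha => h a (h _ ?_)
  calc
    star (star a * a) * (star a * a) = star a ^ 2 * a ^ 2 := by rw [star_mul, star_star]; ring
    _ = 0 := by rw [ha, mul_zero]

end HasProperInvolution

end Baer

section Idempotents

theorem span_isIdempotentElem_le_integralClosure (R A : Type*) [CommRing R] [CommRing A]
    [Algebra R A] :
    Submodule.span R {e : A | IsIdempotentElem e} ≤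
      Subalgebra.toSubmodule (integralClosure R A) :=
  Submodule.span_le.2 fun e he => ⟨X ^ 2 - X, by monicity!, by simp [sq, IsIdempotentElem.eq he]⟩

theorem map_star_of_span_isIdempotentElem_eq_top {k A : Type*} [Field k] [StarRing k] [Ring A]
    [StarRing A] [Algebra k A] [StarModule k A]
    (hspan : Submodule.span k {e : A | IsIdempotentElem e} = ⊤)
    (hsa : ∀ e : A, IsIdempotentElem e → IsSelfAdjoint e) (χ : A →ₐ[k] k) (a : A) :
    χ (star a) = star (χ a) := by
  have ha : a ∈ Submodule.span k {e : A | IsIdempotentElem e} := hspan ▸ Submodule.mem_top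
  induction ha using Submodule.span_induction with
  | mem e he =>
    rw [(hsa e he).star_eq]
    obtain h | h := IsIdempotentElem.iff_eq_zero_or_one.1 (IsIdempotentElem.map he χ) <;> simp [h]
  | zero => simp
  | add a b _ _ ha hb => simp [ha, hb]
  | smul c a _ ha => simp [ha, star_smul]

end Idempotents

section CharacteristicFunctions

theorem isLocallyConstant_of_finite_range {X Y : Type*} [TopologicalSpace X] {f : X → Y}
    (hfin : (Set.range f).Finite) (hclosed : ∀ y, IsClosed (f ⁻¹' {y})) :
    IsLocallyConstant f := by
  refine IsLocallyConstant.iff_isOpen_fiber.2 fun y => ?_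
  have hcompl : (f ⁻¹' {y})ᶜ = ⋃ z ∈ Set.range f \ {y}, f ⁻¹' {z} := by
    ext x
    simp
  rw [← isClosed_compl_iff, hcompl]
  exact (hfin.subset Set.sdiff_subset).isClosed_biUnion fun z _ => hclosed z

theorem span_charFn_eq_top (k X : Type*) [Semiring k] [TopologicalSpace X] [CompactSpace X] :
    Submodule.span k (Set.range fun U : Clopens X => LocallyConstant.charFn k U.isClopen) = ⊤ := by
  refine (Submodule.eq_top_iff').2 fun f => ?_
  have hf : f = ∑ c ∈ f.range_finite.toFinset,
      c • LocallyConstant.charFn k (f.isLocallyConstant.isClopen_fiber c) := by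
    ext x
    change f x = LocallyConstant.evalₗ k x _
    rw [map_sum, Finset.sum_eq_single (f x)]
    · simp [LocallyConstant.coe_charFn]
    · intro c _ hc
      simp [LocallyConstant.coe_charFn, hc.symm]
    · simp
  rw [hf]
  exact Submodule.sum_mem _ fun c _ => Submodule.smul_mem _ _ <| Submodule.subset_span
    ⟨⟨_, f.isLocallyConstant.isClopen_fiber c⟩, rfl⟩

theorem clopenCharacteristicFunctions_eq_range (T : Type*) [TopologicalSpace T] :
    clopenCharacteristicFunctions T =
      Set.range fun U : Clopens T => (LocallyConstant.charFn ℂ U.isClopen : C(T, ℂ)) := by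
  ext f
  constructor
  · rintro ⟨U, hU, hf⟩
    exact ⟨⟨U, hU⟩, ContinuousMap.ext fun t => (hf t).symm⟩
  · rintro ⟨U, rfl⟩
    exact ⟨U, U.isClopen, fun _ => rfl⟩

theorem isIdempotentElem_of_mem_clopenCharacteristicFunctions {T : Type*} [TopologicalSpace T]
    {f : C(T, ℂ)} (hf : f ∈ clopenCharacteristicFunctions T) : IsIdempotentElem f := by
  obtain ⟨U, -, hU⟩ := hf
  ext t
  by_cases ht : t ∈ U <;> simp [hU, ht]

theorem span_clopenCharacteristicFunctions (T : Type*) [TopologicalSpace T] [CompactSpace T] :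
    Submodule.span ℂ (clopenCharacteristicFunctions T) =
      LinearMap.range (LocallyConstant.toContinuousMapLinearMap (X := T) (Y := ℂ) ℂ) := by
  rw [clopenCharacteristicFunctions_eq_range, LinearMap.range_eq_map, ← span_charFn_eq_top,
    Submodule.map_span, ← Set.range_comp]
  rfl

end CharacteristicFunctions

section Spectrum

theorem eq_zero_iff_forall_mem_asIdeal {R : Type*} [CommRing R] [IsReduced R] {a : R} :
    a = 0 ↔ ∀ p : PrimeSpectrum R, a ∈ p.asIdeal := by
  rw [← Submodule.mem_iInf, ← nilradical_eq_iInf, nilradical_eq_zero, Ideal.zero_eq_bot,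
    Ideal.mem_bot]

theorem vanishingIdeal_compl_zeroLocus {R : Type*} [CommRing R] [IsReduced R] (I : Ideal R) :
    vanishingIdeal (zeroLocus (I : Set R))ᶜ = I.annihilator := by
  ext x
  simp only [mem_vanishingIdeal, Submodule.mem_annihilator, smul_eq_mul,
    eq_zero_iff_forall_mem_asIdeal (a := x * _)]
  constructor
  · intro h y hy p
    by_cases hp : p ∈ zeroLocus (I : Set R)
    · exact p.asIdeal.mul_mem_left x (hp hy)
    · exact p.asIdeal.mul_mem_right y (h p hp)
  · intro h p hp
    obtain ⟨y, hy, hyp⟩ := Set.not_subset.1 hp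
    exact (p.isPrime.mem_or_mem (h y hy p)).resolve_right hyp

theorem extremallyDisconnected_primeSpectrum {R : Type*} [CommRing R] [IsReduced R]
    (h : ∀ I : Ideal R, ∃ e, IsIdempotentElem e ∧ I.annihilator = Ideal.span {e}) :
    ExtremallyDisconnected (PrimeSpectrum R) := by
  refine ⟨fun U hU => ?_⟩
  obtain ⟨I, hI⟩ := (isClosed_iff_zeroLocus_ideal _).1 hU.isClosed_compl
  obtain ⟨e, he, hIe⟩ := h I
  have hclosure : closure U = zeroLocus {e} := by
    rw [← zeroLocus_vanishingIdeal_eq_closure, ← compl_compl U, hI, vanishingIdeal_compl_zeroLocus,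
      hIe, zeroLocus_span]
  exact (isClopen_iff_zeroLocus.2 ⟨e, he, hclosure⟩).isOpen

variable (k : Type*) [Field k] [IsAlgClosed k]
variable {B : Type*} [CommRing B] [Algebra k B] [Algebra.IsIntegral k B]

/-- The residue field of a prime of an algebra integral over an algebraically closed field `k`
is `k` itself. -/
noncomputable def residueEquiv (p : PrimeSpectrum B) : (B ⧸ p.asIdeal) ≃ₐ[k] k :=
  (AlgEquiv.ofBijective (Algebra.ofId k (B ⧸ p.asIdeal))
    IsAlgClosed.algebraMap_bijective_of_isIntegral).symm

/-- The character `B → B / p ≃ k` attached to a prime `p` of `B`. -/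
noncomputable def residueHom (p : PrimeSpectrum B) : B →ₐ[k] k :=
  (residueEquiv k p).toAlgHom.comp (Ideal.Quotient.mkₐ k p.asIdeal)

theorem residueHom_eq_zero_iff {p : PrimeSpectrum B} {b : B} :
    residueHom k p b = 0 ↔ b ∈ p.asIdeal := by
  rw [← Ideal.Quotient.eq_zero_iff_mem]
  exact map_eq_zero_iff _ (residueEquiv k p).injective

theorem residueHom_eq_iff {p : PrimeSpectrum B} {b : B} {c : k} :
    residueHom k p b = c ↔ b - algebraMap k B c ∈ p.asIdeal := by
  rw [← residueHom_eq_zero_iff k, map_sub, AlgHom.commutes, sub_eq_zero,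
    Algebra.algebraMap_self_apply]

theorem isLocallyConstant_residueHom (b : B) :
    IsLocallyConstant fun p : PrimeSpectrum B => residueHom k p b := by
  refine isLocallyConstant_of_finite_range ?_ fun c => ?_
  · obtain ⟨f, hf, hfb⟩ := Algebra.IsIntegral.isIntegral (R := k) b
    refine (f.rootSet_finite k).subset ?_
    rintro _ ⟨p, rfl⟩
    rw [mem_rootSet_of_ne hf.ne_zero, aeval_algHom_apply, aeval_def, hfb, map_zero]
  · convert isClosed_zeroLocus {b - algebraMap k B c} using 1
    ext p
    simp [residueHom_eq_iff]

theorem residueHom_injective : Function.Injective (residueHom k : PrimeSpectrum B → B →ₐ[k] k) := by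
  intro p q hpq
  ext b
  rw [← residueHom_eq_zero_iff k, hpq, residueHom_eq_zero_iff]

theorem t2Space_primeSpectrum_of_isIntegral (k B : Type*) [Field k] [IsAlgClosed k] [CommRing B]
    [Algebra k B] [Algebra.IsIntegral k B] : T2Space (PrimeSpectrum B) := by
  let : TopologicalSpace k := ⊥
  have : DiscreteTopology k := ⟨rfl⟩
  exact T2Space.of_injective_continuous
    (DFunLike.coe_injective.comp (residueHom_injective k (B := B)))
    (continuous_pi fun b => (isLocallyConstant_residueHom k b).continuous)

/-- The Gelfand transform `b ↦ (p ↦ b mod p)`. Since the spectrum is the prime spectrum, its values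
are locally constant functions and no topology on `k` is involved. -/
noncomputable def gelfandHom : B →ₐ[k] LocallyConstant (PrimeSpectrum B) k where
  toFun b := ⟨fun p => residueHom k p b, isLocallyConstant_residueHom k b⟩
  map_one' := by ext; simp
  map_mul' _ _ := by ext; simp
  map_zero' := by ext; simp
  map_add' _ _ := by ext; simp
  commutes' _ := by ext; simp

@[simp]
theorem gelfandHom_apply (b : B) (p : PrimeSpectrum B) : gelfandHom k b p = residueHom k p b := rfl

theorem gelfandHom_injective [IsReduced B] :
    Function.Injective (gelfandHom k : B →ₐ[k] LocallyConstant (PrimeSpectrum B) k) := by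
  refine (injective_iff_map_eq_zero _).2 fun b hb => ?_
  exact eq_zero_iff_forall_mem_asIdeal.2 fun p =>
    (residueHom_eq_zero_iff k).1 (LocallyConstant.congr_fun hb p)

theorem gelfandHom_eq_charFn {e : B} (he : IsIdempotentElem e)
    {U : Set (PrimeSpectrum B)} (hU : IsClopen U) (heU : U = basicOpen e) :
    gelfandHom k e = LocallyConstant.charFn k hU := by
  ext p
  have hp : p ∈ U ↔ residueHom k p e ≠ 0 := by
    rw [heU, SetLike.mem_coe, mem_basicOpen, Ne, residueHom_eq_zero_iff]
  obtain h | h := IsIdempotentElem.iff_eq_zero_or_one.1 (he.map (residueHom k p)) <;>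
    simp [LocallyConstant.coe_charFn, hp, h]

theorem map_gelfandHom_span_isIdempotentElem :
    (Submodule.span k {e : B | IsIdempotentElem e}).map (gelfandHom k).toLinearMap = ⊤ := by
  rw [Submodule.map_span, ← top_le_iff, ← span_charFn_eq_top]
  refine Submodule.span_mono ?_
  rintro _ ⟨U, rfl⟩
  obtain ⟨e, he, hU⟩ := PrimeSpectrum.isClopen_iff.1 U.isClopen
  exact ⟨e, he, gelfandHom_eq_charFn k he U.isClopen hU⟩

theorem gelfandHom_surjective :
    Function.Surjective (gelfandHom k : B →ₐ[k] LocallyConstant (PrimeSpectrum B) k) :=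
  LinearMap.range_eq_top.1 <| top_le_iff.1 <|
    (map_gelfandHom_span_isIdempotentElem k).ge.trans LinearMap.map_le_range

theorem span_isIdempotentElem_eq_top [IsReduced B] :
    Submodule.span k {e : B | IsIdempotentElem e} = ⊤ := by
  refine Submodule.map_injective_of_injective (f := (gelfandHom k).toLinearMap)
    (gelfandHom_injective k) ?_
  rw [map_gelfandHom_span_isIdempotentElem, Submodule.map_top,
    LinearMap.range_eq_top.2 (gelfandHom_surjective k)]

end Spectrum

section GelfandTransform

variable {B : Type*} [CommRing B] [Algebra ℂ B] [Algebra.IsIntegral ℂ B] [StarRing B]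
  [StarModule ℂ B]

/-- The Gelfand transform over `ℂ` as a `*`-homomorphism into the continuous functions on the prime
spectrum. -/
noncomputable def gelfandStarHom (h : HasProperInvolution B) :
    B →⋆ₐ[ℂ] C(PrimeSpectrum B, ℂ) where
  __ := (LocallyConstant.toContinuousMapAlgHom ℂ).comp (gelfandHom ℂ)
  map_star' b := by
    have := h.isReduced
    ext p
    exact map_star_of_span_isIdempotentElem_eq_top (span_isIdempotentElem_eq_top ℂ)
      (fun _ => h.isSelfAdjoint_of_isIdempotentElem) (residueHom ℂ p) b

theorem gelfandStarHom_injective (h : HasProperInvolution B) :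
    Function.Injective (gelfandStarHom h) :=
  have := h.isReduced
  LocallyConstant.toContinuousMap_injective.comp (gelfandHom_injective ℂ)

theorem coe_range_gelfandStarHom (h : HasProperInvolution B) :
    ((gelfandStarHom h).range : Set C(PrimeSpectrum B, ℂ)) =
      Submodule.span ℂ (clopenCharacteristicFunctions (PrimeSpectrum B)) := by
  rw [span_clopenCharacteristicFunctions]
  exact (gelfandHom_surjective ℂ (B := B)).range_comp LocallyConstant.toContinuousMap

end GelfandTransform

section ClopenSpan

variable {T : Type*} [TopologicalSpace T] {S : StarSubalgebra ℂ C(T, ℂ)}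

theorem isIntegral_of_subset_span_clopenCharacteristicFunctions
    (hS : (S : Set C(T, ℂ)) ⊆ Submodule.span ℂ (clopenCharacteristicFunctions T)) :
    Algebra.IsIntegral ℂ S := by
  have hle : S.toSubalgebra ≤ integralClosure ℂ C(T, ℂ) := fun f hf =>
    span_isIdempotentElem_le_integralClosure ℂ _ <|
      Submodule.span_mono (fun _ => isIdempotentElem_of_mem_clopenCharacteristicFunctions) <|
        hS hf
  exact ⟨fun f => (isIntegral_algHom_iff S.subtype.toAlgHom Subtype.val_injective).1 (hle f.2)⟩

theorem isBaerStarRing_of_clopenCharacteristicFunctions_subset [ExtremallyDisconnected T]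
    (hS : clopenCharacteristicFunctions T ⊆ S) : IsBaerStarRing S := by
  refine isBaerStarRing_iff.2 fun F _ => ?_
  let V : Set T := closure (⋃ s ∈ F, Function.support (s : C(T, ℂ)))
  have hVopen : IsOpen V := ExtremallyDisconnected.open_closure _ <|
    isOpen_biUnion fun s _ => (map_continuous (s : C(T, ℂ))).isOpen_support
  have hV : IsClopen Vᶜ := IsClopen.compl ⟨isClosed_closure, hVopen⟩
  let f : C(T, ℂ) := LocallyConstant.charFn ℂ hV
  have hf : f ∈ clopenCharacteristicFunctions T := ⟨_, hV, fun _ => rfl⟩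
  have hfix (y : C(T, ℂ)) : f * y = y ↔ V ⊆ y ⁻¹' {0} := by
    refine ContinuousMap.ext_iff.trans (forall_congr' fun t => ?_)
    by_cases ht : t ∈ V <;> simp [f, LocallyConstant.coe_charFn, ht, eq_comm]
  have hann (y : C(T, ℂ)) : V ⊆ y ⁻¹' {0} ↔ ∀ s ∈ F, (s : C(T, ℂ)) * y = 0 := by
    rw [(isClosed_singleton.preimage (map_continuous y)).closure_subset_iff, Set.iUnion₂_subset_iff]
    refine forall₂_congr fun s _ => ?_
    simp only [Set.subset_def, Function.mem_support, Set.mem_preimage, Set.mem_singleton_iff,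
      ContinuousMap.ext_iff, ContinuousMap.mul_apply, ContinuousMap.zero_apply, mul_eq_zero,
      or_iff_not_imp_left]
  refine ⟨⟨f, hS hf⟩, ⟨Subtype.ext (isIdempotentElem_of_mem_clopenCharacteristicFunctions hf).eq,
    Subtype.ext ?_⟩, fun y => ?_⟩
  · ext t
    by_cases ht : t ∈ V <;> simp [f, LocallyConstant.coe_charFn, ht]
  · simpa [Subtype.ext_iff] using ((hfix y).trans (hann y)).symm

end ClopenSpan

/-- A commutative complex `*`-algebra is an algebraic Baer `*`-algebra
iff it is `*`-isomorphic to the ℂ-linear span, inside `C(T, ℂ)` for some Stonean space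
`T`, of the characteristic functions of the clopen subsets of `T`. -/
theorem commutative_algebraic_baer_iff_span_clopen (B : Type u) [NonUnitalCommRing B]
    [Module ℂ B] [SMulCommClass ℂ B B] [IsScalarTower ℂ B B] [StarRing B] [StarModule ℂ B] :
    (IsAlgebraicAlgebra B ∧ IsBaerStarRing B) ↔
      ∃ (T : Type u) (_ : TopologicalSpace T), CompactSpace T ∧ T2Space T ∧
        ExtremallyDisconnected T ∧
        ∃ S : StarSubalgebra ℂ C(T, ℂ),
          (S : Set C(T, ℂ)) =
            (Submodule.span ℂ (clopenCharacteristicFunctions T) : Set C(T, ℂ)) ∧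
          Nonempty (B ≃⋆ₐ[ℂ] S) := by
  constructor
  · rintro ⟨halg, hbaer⟩
    obtain ⟨u, hu⟩ := hbaer.exists_left_unit
    let : CommRing B :=
      { ‹NonUnitalCommRing B› with
        one := u, one_mul := hu, mul_one := fun b => (mul_comm b u).trans (hu b) }
    let : Algebra ℂ B := Algebra.ofModule smul_mul_assoc mul_smul_comm
    have : Algebra.IsIntegral ℂ B := isAlgebraicAlgebra_iff_isIntegral.1 halg
    have hproper : HasProperInvolution B := hbaer.hasProperInvolution
    have := hproper.isReduced
    exact ⟨PrimeSpectrum B, inferInstance, inferInstance, t2Space_primeSpectrum_of_isIntegral ℂ B,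
      extremallyDisconnected_primeSpectrum hbaer.exists_annihilator_eq_span,
      (gelfandStarHom hproper).range, coe_range_gelfandStarHom hproper,
      ⟨StarAlgEquiv.ofInjective _ (gelfandStarHom_injective hproper)⟩⟩
  · rintro ⟨T, _, _, _, _, S, hS, ⟨φ⟩⟩
    have := isIntegral_of_subset_span_clopenCharacteristicFunctions hS.subset
    have hsub : clopenCharacteristicFunctions T ⊆ S := hS ▸ Submodule.subset_span
    exact ⟨(isAlgebraicAlgebra_iff_isIntegral.2 this).of_injective φ φ.injective,
      (isBaerStarRing_of_clopenCharacteristicFunctions_subset hsub).of_starRingEquiv φ⟩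
end
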